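/- arXiv:1211.4514 — 2 statements merged into one kernel-verified Lean document; each statement's English description precedes it below -/
import Mathlib

section
/- One has (2/3) ∫_{θ=0}^{π/2} (2 + cos θ)² / ( (1 + cos θ) √(1 + 2 cos θ) ) dθ = (2/3) · ( −1 + 2√3 E(π/4, 4/3) + 2√3 F(π/4, 4/3) ), where E(φ, μ) = ∫₀^{φ} √(1 − μ sin²θ) dθ and F(φ, μ) = ∫₀^{φ} dθ/√(1 − μ sin²θ) are the incomplete elliptic integrals of the second and first kinds. -/
open Real

/-- Incomplete elliptic integral of the second kind E(φ, μ) = ∫₀^φ √(1 − μ sin²θ) dθ. -/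
noncomputable def ellipticE (φ μ : ℝ) : ℝ :=
  ∫ θ in (0 : ℝ)..φ, Real.sqrt (1 - μ * Real.sin θ ^ 2)

/-- Incomplete elliptic integral of the first kind F(φ, μ) = ∫₀^φ dθ/√(1 − μ sin²θ). -/
noncomputable def ellipticF (φ μ : ℝ) : ℝ :=
  ∫ θ in (0 : ℝ)..φ, 1 / Real.sqrt (1 - μ * Real.sin θ ^ 2)

theorem oloid_aux (θ : ℝ) :
    Real.sqrt (1 - 4 / 3 * Real.sin (θ / 2) ^ 2) = Real.sqrt (1 + 2 * Real.cos θ) / Real.sqrt 3 := by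
  rw [← Real.sqrt_div' _ (by norm_num)]
  congr 1
  have h : Real.cos θ = 1 - 2 * Real.sin (θ / 2) ^ 2 := by
    have h1 := Real.cos_two_mul (θ / 2)
    have h2 := Real.sin_sq_add_cos_sq (θ / 2)
    rw [show 2 * (θ / 2) = θ by ring] at h1
    linarith
  rw [h]; ring

theorem oloid_E : 2 * Real.sqrt 3 * ellipticE (Real.pi / 4) (4/3)
    = ∫ θ in (0 : ℝ)..(Real.pi / 2), Real.sqrt (1 + 2 * Real.cos θ) := by
  have h := intervalIntegral.integral_comp_div (a := 0) (b := Real.pi / 2) (c := 2)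
    (fun x => Real.sqrt (1 - 4 / 3 * Real.sin x ^ 2)) (by norm_num)
  simp only [oloid_aux, smul_eq_mul, zero_div] at h
  rw [show Real.pi / 2 / 2 = Real.pi / 4 by ring, intervalIntegral.integral_div] at h
  have h3 : Real.sqrt 3 ≠ 0 := by positivity
  unfold ellipticE
  rw [div_eq_iff h3] at h
  linarith

theorem oloid_F : 2 * Real.sqrt 3 * ellipticF (Real.pi / 4) (4/3)
    = ∫ θ in (0 : ℝ)..(Real.pi / 2), 3 / Real.sqrt (1 + 2 * Real.cos θ) := by
  have h := intervalIntegral.integral_comp_div (a := 0) (b := Real.pi / 2) (c := 2)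
    (fun x => 1 / Real.sqrt (1 - 4 / 3 * Real.sin x ^ 2)) (by norm_num)
  simp only [oloid_aux, smul_eq_mul, zero_div] at h
  rw [show Real.pi / 2 / 2 = Real.pi / 4 by ring] at h
  unfold ellipticF
  rw [mul_right_comm, ← h, mul_comm, ← intervalIntegral.integral_const_mul]
  congr 1
  ext θ
  have h3 : Real.sqrt 3 * Real.sqrt 3 = 3 := Real.mul_self_sqrt (by norm_num)
  rw [one_div_div, ← mul_div_assoc, h3]

theorem oloid_G : (∫ θ in (0 : ℝ)..(Real.pi / 2), ((2 + Real.cos θ) ^ 2 /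
      ((1 + Real.cos θ) * Real.sqrt (1 + 2 * Real.cos θ)) -
      (Real.sqrt (1 + 2 * Real.cos θ) + 3 / Real.sqrt (1 + 2 * Real.cos θ)))) = -1 ∧
    IntervalIntegrable (fun θ => Real.sqrt (1 + 2 * Real.cos θ)) MeasureTheory.volume 0 (Real.pi / 2) ∧
    IntervalIntegrable (fun θ => 3 / Real.sqrt (1 + 2 * Real.cos θ))
      MeasureTheory.volume 0 (Real.pi / 2) ∧
    IntervalIntegrable (fun θ => (2 + Real.cos θ) ^ 2 /
      ((1 + Real.cos θ) * Real.sqrt (1 + 2 * Real.cos θ))) MeasureTheory.volume 0 (Real.pi / 2) := by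
  have hc : ∀ θ ∈ Set.uIcc 0 (Real.pi / 2), 0 ≤ Real.cos θ := by
    intro θ hθ
    rw [Set.uIcc_of_le (by positivity)] at hθ
    exact Real.cos_nonneg_of_mem_Icc ⟨by linarith [hθ.1, Real.pi_pos], hθ.2⟩
  have hR : ∀ θ ∈ Set.uIcc 0 (Real.pi / 2), Real.sqrt (1 + 2 * Real.cos θ) ≠ 0 := by
    intro θ hθ
    have := hc θ hθ
    positivity
  have hN : ∀ θ ∈ Set.uIcc 0 (Real.pi / 2), 1 + Real.cos θ ≠ 0 := by
    intro θ hθ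
    have := hc θ hθ
    positivity
  have c0 : Continuous (fun θ => Real.sqrt (1 + 2 * Real.cos θ)) := by fun_prop
  have i1 := c0.intervalIntegrable (μ := MeasureTheory.volume) 0 (Real.pi / 2)
  have i2 : IntervalIntegrable (fun θ => 3 / Real.sqrt (1 + 2 * Real.cos θ))
      MeasureTheory.volume 0 (Real.pi / 2) :=
    (continuousOn_const.div c0.continuousOn hR).intervalIntegrable
  have i3 : IntervalIntegrable (fun θ => (2 + Real.cos θ) ^ 2 /
      ((1 + Real.cos θ) * Real.sqrt (1 + 2 * Real.cos θ))) MeasureTheory.volume 0 (Real.pi / 2) := by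
    apply ContinuousOn.intervalIntegrable
    apply ContinuousOn.div (by fun_prop) (by fun_prop)
    exact fun θ hθ => mul_ne_zero (hN θ hθ) (hR θ hθ)
  refine ⟨?_, i1, i2, i3⟩
  rw [intervalIntegral.integral_eq_sub_of_hasDerivAt
    (f := fun θ => -(Real.sin θ * Real.sqrt (1 + 2 * Real.cos θ) / (1 + Real.cos θ)))
    _ (i3.sub (i1.add i2))]
  · simp
  · intro θ hθ
    have hp := hc θ hθ
    have hr := hR θ hθ
    have hn := hN θ hθ
    have hd := ((((Real.hasDerivAt_sin θ).mul
      ((((Real.hasDerivAt_cos θ).const_mul 2).const_add 1).sqrt (by positivity))).div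
      ((Real.hasDerivAt_cos θ).const_add 1) hn)).neg
    refine hd.congr_deriv ?_
    have hs : Real.sqrt (1 + 2 * Real.cos θ) ^ 2 = 1 + 2 * Real.cos θ :=
      Real.sq_sqrt (by positivity)
    have hsc := Real.sin_sq θ
    simp only [Pi.mul_apply]
    generalize Real.sqrt (1 + 2 * Real.cos θ) = r at *
    generalize Real.cos θ = c at *
    generalize Real.sin θ = s at *
    field_simp
    simp only [hsc, hs]
    ring

/-- the oloid volume integral has the stated elliptic closed form. -/
theorem oloid_volume_integral :
    (2 / 3) * (∫ θ in (0 : ℝ)..(Real.pi / 2),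
        (2 + Real.cos θ) ^ 2 / ((1 + Real.cos θ) * Real.sqrt (1 + 2 * Real.cos θ))) =
      (2 / 3) * (-1 + 2 * Real.sqrt 3 * ellipticE (Real.pi / 4) (4/3)
        + 2 * Real.sqrt 3 * ellipticF (Real.pi / 4) (4/3)) := by
  obtain ⟨h, i1, i2, i3⟩ := oloid_G
  rw [intervalIntegral.integral_sub i3 (i1.add i2), intervalIntegral.integral_add i1 i2,
    ← oloid_E, ← oloid_F] at h
  linarith
end

section
/- With ω = arcsin(√(√2 − 1)), one has (1/(2√2)) ∫_{θ=0}^{π/2} ( (2 + √2 cos θ)² (1 + √2 cos θ + cos²θ) ) / ( (1 + √2 cos θ)² √(1 + 2√2 cos θ + cos²θ) ) dθ = (√2 − 1)/2 + E(ω, −1) + √2 ( Π(−√2 − 1, ω, −1) + Π(√2 − 1, ω, −1) − F(ω, −1) ), where E(φ, μ) = ∫₀^{φ} √(1 − μ sin²θ) dθ, F(φ, μ) = ∫₀^{φ} dθ/√(1 − μ sin²θ), and Π(ν, φ, μ) = ∫₀^{φ} dθ / ( (1 − ν sin²θ) √(1 − μ sin²θ) ) are the incomplete elliptic integrals of the second,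 first, and third kinds. -/
open Real

/-- Incomplete elliptic integral of the third kind
Π(ν, φ, μ) = ∫₀^φ dθ/((1 − ν sin²θ)√(1 − μ sin²θ)). -/
noncomputable def ellipticPi (ν φ μ : ℝ) : ℝ :=
  ∫ θ in (0 : ℝ)..φ,
    1 / ((1 - ν * Real.sin θ ^ 2) * Real.sqrt (1 - μ * Real.sin θ ^ 2))


/-- Derivative of the algebraic part of the primitive. -/
lemma roller_deriv (c : ℝ) (hc0 : 0 < c) (hc1 : c < 1) (φ : ℝ) :
    HasDerivAt (fun φ => (sin φ * cos φ * √(1 + sin φ ^ 2)) *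
        (c * (1 - sin φ ^ 2) / ((c + sin φ ^ 2) * (1 - c * sin φ ^ 2))))
      ((((1 - 3 * sin φ ^ 4)) / √(1 + sin φ ^ 2)) *
        (c * (1 - sin φ ^ 2) / ((c + sin φ ^ 2) * (1 - c * sin φ ^ 2))) +
       (sin φ * cos φ * √(1 + sin φ ^ 2)) *
        ((c * (-(2 * sin φ * cos φ)) * ((c + sin φ ^ 2) * (1 - c * sin φ ^ 2))
          - c * (1 - sin φ ^ 2) * (2 * sin φ * cos φ * (1 - c * sin φ ^ 2)
            + (c + sin φ ^ 2) * (-(c * (2 * sin φ * cos φ)))))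
          / ((c + sin φ ^ 2) * (1 - c * sin φ ^ 2)) ^ 2)) φ := by
  have hv0 : 0 ≤ sin φ ^ 2 := sq_nonneg _
  have hv1 : sin φ ^ 2 ≤ 1 := sin_sq_le_one φ
  have h1 : 0 < 1 + sin φ ^ 2 := by linarith
  have h2 : 0 < c + sin φ ^ 2 := by linarith
  have h3 : 0 < 1 - c * sin φ ^ 2 := by nlinarith
  have hv : HasDerivAt (fun φ => sin φ ^ 2) (2 * sin φ * cos φ) φ := by
    exact ((hasDerivAt_sin φ).pow 2).congr_deriv (by simp)
  have hs := (hv.const_add 1).sqrt h1.ne'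
  have hg := ((hasDerivAt_sin φ).mul (hasDerivAt_cos φ)).mul hs
  have hq := ((hv.const_sub 1).const_mul c).div
    ((hv.const_add c).mul ((hv.const_mul c).const_sub 1)) (mul_pos h2 h3).ne'
  refine (hg.mul hq).congr_deriv ?_
  have hsq : √(1 + sin φ ^ 2) ^ 2 = 1 + sin φ ^ 2 := sq_sqrt h1.le
  have hsp : 0 < √(1 + sin φ ^ 2) := sqrt_pos.2 h1
  have hc2 : cos φ ^ 2 = 1 - sin φ ^ 2 := cos_sq' φ
  simp only [Pi.mul_apply, Pi.div_apply]
  congr 2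
  field_simp
  rw [hsq, hc2]
  ring

/-- The pointwise identity between integrands. -/
lemma roller_point (c a S C v w : ℝ) (hc0 : 0 < c) (hcc : c ^ 2 = 1 - 2 * c) (ha : a = c + 1)
    (hw : 0 < w) (hw2 : w ^ 2 = 1 + v) (hSv : S ^ 2 = v) (hCv : C ^ 2 = 1 - v) (h2 : 0 < c + v)
    (h3 : 0 < 1 - c * v) (P : ℝ)
    (hP : P = c * (1 - v) / ((c + v) * (1 - c * v))) :
    a * c * ((1 + c * v) ^ 2 * (1 + v ^ 2) / ((c + v) ^ 2 * (1 - c * v) ^ 2)) / w =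
     w + a * (1 / ((1 - (-a - 1) * v) * w) + 1 / ((1 - (a - 1) * v) * w) - 1 / w)
     + ((1 - 3 * v ^ 2) / w * P + (S * C * w) *
        ((c * (-(2 * S * C)) * ((c + v) * (1 - c * v))
          - c * (1 - v) * (2 * S * C * (1 - c * v)
            + (c + v) * (-(c * (2 * S * C)))))
          / ((c + v) * (1 - c * v)) ^ 2)) := by
  have e1 : 1 - (-a - 1) * v = (c + v) / c := by
    rw [ha, eq_div_iff hc0.ne']; linear_combination v * hcc
  have e2 : 1 - (a - 1) * v = 1 - c * v := by rw [ha]; ring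
  have e3 : (S * C * w) *
        ((c * (-(2 * S * C)) * ((c + v) * (1 - c * v))
          - c * (1 - v) * (2 * S * C * (1 - c * v)
            + (c + v) * (-(c * (2 * S * C)))))
          / ((c + v) * (1 - c * v)) ^ 2) = (2 * v * (1 - v) * (1 + v)) *
        ((c * (-1) * ((c + v) * (1 - c * v))
          - c * (1 - v) * ((1 - c * v)
            + (c + v) * (-c)))
          / ((c + v) * (1 - c * v)) ^ 2) / w := by
    rw [← hw2, ← hCv, ← hSv]
    field_simp
  have e4 : w = (1 + v) / w := by rw [← hw2]; field_simp
  rw [e1, e2, e3, hP]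
  nth_rewrite 2 [e4]
  rw [ha]
  have h2' := h2.ne'
  have h3' := h3.ne'
  field_simp
  grind

lemma roller_sub (c a : ℝ) (hc0 : 0 < c) (hc1 : c < 1) (hcc : c ^ 2 = 1 - 2 * c)
    (ha : a = c + 1) :
    (∫ θ in (0 : ℝ)..(π / 2),
        ((2 + a * cos θ) ^ 2 * (1 + a * cos θ + cos θ ^ 2))
          / ((1 + a * cos θ) ^ 2 * √(1 + 2 * a * cos θ + cos θ ^ 2))) =
    ∫ φ in (0 : ℝ)..(arcsin (√c)), 2 * a * (a * c * ((1 + c * sin φ ^ 2) ^ 2 * (1 + (sin φ ^ 2) ^ 2)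
        / ((c + sin φ ^ 2) ^ 2 * (1 - c * sin φ ^ 2) ^ 2)) / √(1 + sin φ ^ 2)) := by
  have hr0 : 0 < √c := sqrt_pos.2 hc0
  have hr2 : √c ^ 2 = c := sq_sqrt hc0.le
  have hr1 : √c < 1 := by rw [sqrt_lt' one_pos]; linarith
  have haa : a ^ 2 = 2 := by rw [ha]; linear_combination hcc
  have ha0 : 0 < a := by linarith
  have hω : 0 ≤ arcsin (√c) := arcsin_nonneg.2 hr0.le
  have hω2 : arcsin (√c) < π / 2 := arcsin_lt_pi_div_two.2 hr1
  have hcos : ∀ φ, cos (2 * arctan (sin φ / √c)) = (c - sin φ ^ 2) / (c + sin φ ^ 2) := by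
    intro φ
    rw [cos_two_mul, cos_sq_arctan, div_pow, hr2]
    have : 0 < c + sin φ ^ 2 := by positivity
    field_simp
    ring
  have hsin : ∀ φ ∈ Set.uIcc 0 (arcsin (√c)), sin φ ^ 2 ≤ c ∧ 0 < cos φ := by
    intro φ hφ
    rw [Set.uIcc_of_le hω] at hφ
    refine ⟨?_, cos_pos_of_mem_Ioo ⟨by linarith [hφ.1, pi_pos], by linarith [hφ.2]⟩⟩
    have h1 : sin φ ≤ √c := by
      rw [← sin_arcsin (by linarith : -1 ≤ √c) hr1.le]
      exact sin_le_sin_of_le_of_le_pi_div_two (by linarith [hφ.1, pi_pos]) hω2.le hφ.2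
    have h0 : 0 ≤ sin φ := sin_nonneg_of_nonneg_of_le_pi hφ.1 (by linarith [hφ.2, pi_pos])
    rw [← hr2]
    exact pow_le_pow_left₀ h0 h1 2
  have hd : ∀ φ, HasDerivAt (fun φ => 2 * arctan (sin φ / √c))
      (2 * (1 / (1 + (sin φ / √c) ^ 2) * (cos φ / √c))) φ := fun φ =>
    (((hasDerivAt_sin φ).div_const _).arctan).const_mul 2
  have key := intervalIntegral.integral_comp_mul_deriv' (a := 0) (b := arcsin (√c))
    (f := fun φ => 2 * arctan (sin φ / √c))
    (f' := fun φ => 2 * (1 / (1 + (sin φ / √c) ^ 2) * (cos φ / √c)))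
    (g := fun θ => ((2 + a * cos θ) ^ 2 * (1 + a * cos θ + cos θ ^ 2))
          / ((1 + a * cos θ) ^ 2 * √(1 + 2 * a * cos θ + cos θ ^ 2)))
    (fun φ _ => hd φ)
    (by
      apply Continuous.continuousOn
      have : ∀ φ, 1 + (sin φ / √c) ^ 2 ≠ 0 := fun φ => by positivity
      fun_prop (disch := assumption))
    (by
      have hnn : ∀ θ ∈ (fun φ => 2 * arctan (sin φ / √c)) '' Set.uIcc 0 (arcsin (√c)),
          0 ≤ cos θ := by
        rintro _ ⟨φ, hφ, rfl⟩
        simp only [hcos]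
        have := (hsin φ hφ).1
        apply div_nonneg <;> nlinarith [sq_nonneg (sin φ)]
      apply ContinuousOn.div (by fun_prop) (by fun_prop)
      intro θ hθ
      have := hnn θ hθ
      positivity)
  simp only [sin_zero, zero_div, arctan_zero, mul_zero,
    sin_arcsin (by linarith : -1 ≤ √c) hr1.le, div_self hr0.ne', arctan_one] at key
  rw [show 2 * (π / 4) = π / 2 by ring] at key
  rw [← key]
  apply intervalIntegral.integral_congr
  intro φ hφ
  obtain ⟨hv, hC⟩ := hsin φ hφ
  simp only [Function.comp, hcos]
  have hC2 : cos φ ^ 2 = 1 - sin φ ^ 2 := cos_sq' φ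
  have hv0 : 0 ≤ sin φ ^ 2 := sq_nonneg _
  rw [div_pow (sin φ), hr2]
  generalize hvd : sin φ ^ 2 = v at *
  have h2 : 0 < c + v := by linarith
  have h3 : 0 < 1 - c * v := by nlinarith
  have h1 : 0 < 1 + v := by linarith
  have hw : 0 < √(1 + v) := sqrt_pos.2 h1
  have hw2 : √(1 + v) ^ 2 = 1 + v := sq_sqrt h1.le
  have es : √(1 + 2 * a * ((c - v) / (c + v)) + ((c - v) / (c + v)) ^ 2)
      = a * √c * cos φ * √(1 + v) / (c + v) := by
    rw [show 1 + 2 * a * ((c - v) / (c + v)) + ((c - v) / (c + v)) ^ 2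
        = (a * √c * cos φ * √(1 + v) / (c + v)) ^ 2 by
      rw [div_pow, div_pow, mul_pow, mul_pow, mul_pow, haa, hr2, hC2, hw2, ha]
      field_simp
      grind]
    exact sqrt_sq (by positivity)
  have e1 : 2 + a * ((c - v) / (c + v)) = a * (1 + c * v) / (c + v) := by
    rw [ha]; field_simp; linear_combination (1 - v) * hcc
  have e2 : 1 + a * ((c - v) / (c + v)) + ((c - v) / (c + v)) ^ 2
      = a * c * (1 + v ^ 2) / (c + v) ^ 2 := by
    rw [ha]; field_simp; grind
  have e3 : 1 + a * ((c - v) / (c + v)) = (1 - c * v) / (c + v) := by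
    rw [ha]; field_simp; linear_combination hcc
  rw [es, e1, e2, e3]
  have h2' := h2.ne'
  have h3' := h3.ne'
  have e4 : 2 * (1 / (1 + v / c) * (cos φ / √c)) = 2 * √c * cos φ / (c + v) := by
    have : 1 + v / c = (c + v) / c := by field_simp
    rw [this]
    field_simp
    rw [hr2]
  rw [e4]
  field_simp

/-- the two-circle-roller constant γ has the stated elliptic closed form,
with ω = arcsin(√(√2 − 1)). -/
theorem two_circle_roller_gamma :
    (1 / (2 * Real.sqrt 2)) * (∫ θ in (0 : ℝ)..(Real.pi / 2),
        ((2 + Real.sqrt 2 * Real.cos θ) ^ 2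
            * (1 + Real.sqrt 2 * Real.cos θ + Real.cos θ ^ 2))
          / ((1 + Real.sqrt 2 * Real.cos θ) ^ 2
            * Real.sqrt (1 + 2 * Real.sqrt 2 * Real.cos θ + Real.cos θ ^ 2))) =
      (Real.sqrt 2 - 1) / 2
        + ellipticE (Real.arcsin (Real.sqrt (Real.sqrt 2 - 1))) (-1)
        + Real.sqrt 2 * (ellipticPi (-Real.sqrt 2 - 1) (Real.arcsin (Real.sqrt (Real.sqrt 2 - 1))) (-1)
            + ellipticPi (Real.sqrt 2 - 1) (Real.arcsin (Real.sqrt (Real.sqrt 2 - 1))) (-1)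
            - ellipticF (Real.arcsin (Real.sqrt (Real.sqrt 2 - 1))) (-1)) := by
  have hs2 : √2 ^ 2 = (2:ℝ) := sq_sqrt (by norm_num)
  have hsp : (0:ℝ) < √2 := by positivity
  obtain ⟨c, hc⟩ : ∃ c : ℝ, c = √2 - 1 := ⟨_, rfl⟩
  have ha : √2 = c + 1 := by linarith
  have hc0 : 0 < c := by nlinarith
  have hc1 : c < 1 := by nlinarith
  have hcc : c ^ 2 = 1 - 2 * c := by rw [hc]; linear_combination hs2
  rw [roller_sub c (√2) hc0 hc1 hcc ha, intervalIntegral.integral_const_mul, ← mul_assoc,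
    show 1 / (2 * √2) * (2 * √2) = (1:ℝ) by field_simp, one_mul]
  unfold ellipticE ellipticF ellipticPi
  have hr0 : 0 < √c := sqrt_pos.2 hc0
  have hr2 : √c ^ 2 = c := sq_sqrt hc0.le
  have hr1 : √c < 1 := by rw [sqrt_lt' one_pos]; linarith
  have p1 : ∀ φ : ℝ, 0 < 1 + sin φ ^ 2 := fun φ => by positivity
  have p2 : ∀ φ : ℝ, 0 < c + sin φ ^ 2 := fun φ => by positivity
  have p3 : ∀ φ : ℝ, 0 < 1 - c * sin φ ^ 2 := fun φ => by nlinarith [sin_sq_le_one φ, sq_nonneg (sin φ)]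
  have p4 : ∀ φ : ℝ, 0 < √(1 + sin φ ^ 2) := fun φ => sqrt_pos.2 (p1 φ)
  have p5 : ∀ φ : ℝ, 0 < 1 - (-√2 - 1) * sin φ ^ 2 := fun φ => by
    have : 0 ≤ √2 * sin φ ^ 2 := by positivity
    nlinarith [p1 φ]
  have n4 : ∀ φ : ℝ, √(1 + sin φ ^ 2) ≠ 0 := fun φ => (p4 φ).ne'
  have n5 : ∀ φ : ℝ, (1 - (-√2 - 1) * sin φ ^ 2) * √(1 + sin φ ^ 2) ≠ 0 :=
    fun φ => (mul_pos (p5 φ) (p4 φ)).ne'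
  have n3 : ∀ φ : ℝ, (1 - c * sin φ ^ 2) * √(1 + sin φ ^ 2) ≠ 0 :=
    fun φ => (mul_pos (p3 φ) (p4 φ)).ne'
  have n23 : ∀ φ : ℝ, (c + sin φ ^ 2) * (1 - c * sin φ ^ 2) ≠ 0 :=
    fun φ => (mul_pos (p2 φ) (p3 φ)).ne'
  have n23' : ∀ φ : ℝ, ((c + sin φ ^ 2) * (1 - c * sin φ ^ 2)) ^ 2 ≠ 0 :=
    fun φ => pow_ne_zero 2 (n23 φ)
  have em : ∀ φ : ℝ, 1 - -1 * sin φ ^ 2 = 1 + sin φ ^ 2 := fun φ => by ring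
  simp only [em, ← hc]
  have iE : Continuous (fun φ : ℝ => √(1 + sin φ ^ 2)) := by fun_prop
  have iF : Continuous (fun φ : ℝ => 1 / √(1 + sin φ ^ 2)) := by
    fun_prop (disch := assumption)
  have iP1 : Continuous (fun φ : ℝ => 1 / ((1 - (-√2 - 1) * sin φ ^ 2) * √(1 + sin φ ^ 2))) := by
    fun_prop (disch := assumption)
  have iP2 : Continuous (fun φ : ℝ => 1 / ((1 - c * sin φ ^ 2) * √(1 + sin φ ^ 2))) := by
    fun_prop (disch := assumption)
  have iPP : Continuous (fun φ : ℝ => 1 / ((1 - (-√2 - 1) * sin φ ^ 2) * √(1 + sin φ ^ 2)) +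
      1 / ((1 - c * sin φ ^ 2) * √(1 + sin φ ^ 2))) := iP1.add iP2
  have iPF : Continuous (fun φ : ℝ => √2 * (1 / ((1 - (-√2 - 1) * sin φ ^ 2) * √(1 + sin φ ^ 2)) +
      1 / ((1 - c * sin φ ^ 2) * √(1 + sin φ ^ 2)) - 1 / √(1 + sin φ ^ 2))) :=
    (iPP.sub iF).const_mul _
  have iA : Continuous (fun φ : ℝ => √(1 + sin φ ^ 2) +
      √2 * (1 / ((1 - (-√2 - 1) * sin φ ^ 2) * √(1 + sin φ ^ 2)) +
      1 / ((1 - c * sin φ ^ 2) * √(1 + sin φ ^ 2)) - 1 / √(1 + sin φ ^ 2))) := iE.add iPF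
  have hG := intervalIntegral.integral_eq_sub_of_hasDerivAt (a := 0) (b := arcsin (√c))
    (fun φ _ => roller_deriv c hc0 hc1 φ)
    (by
      apply Continuous.intervalIntegrable
      fun_prop (disch := assumption))
  have hGv : (sin (arcsin (√c)) * cos (arcsin (√c)) * √(1 + sin (arcsin (√c)) ^ 2)) *
        (c * (1 - sin (arcsin (√c)) ^ 2) / ((c + sin (arcsin (√c)) ^ 2) *
          (1 - c * sin (arcsin (√c)) ^ 2))) = c / 2 := by
    rw [cos_arcsin, sin_arcsin (by linarith) hr1.le, hr2, ← sqrt_mul hc0.le,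
      ← sqrt_mul (mul_nonneg hc0.le (by linarith)),
      show c * (1 - c) * (1 + c) = (√2 * c) ^ 2 by
        rw [ha]; linear_combination (-2 * c - c ^ 2 + (c+1)^2 - 1 - c - c ^ 2 ) * hcc,
      sqrt_sq (by positivity), ha]
    have : 1 - c * c ≠ 0 := by nlinarith
    have h1c : 1 - c ^ 2 ≠ 0 := by nlinarith
    field_simp
    grind
  beta_reduce at hG
  rw [hGv] at hG
  simp only [sin_zero, zero_mul, sub_zero] at hG
  rw [add_assoc, ← intervalIntegral.integral_add (iP1.intervalIntegrable _ _) (iP2.intervalIntegrable _ _),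
    ← intervalIntegral.integral_sub (iPP.intervalIntegrable _ _)
      (iF.intervalIntegrable _ _), ← intervalIntegral.integral_const_mul,
    ← intervalIntegral.integral_add (iE.intervalIntegrable _ _)
      (iPF.intervalIntegrable _ _), add_comm (c / 2),
    ← hG, ← intervalIntegral.integral_add]
  · apply intervalIntegral.integral_congr
    intro φ _
    have := roller_point c (√2) (sin φ) (cos φ) (sin φ ^ 2) (√(1 + sin φ ^ 2)) hc0 hcc ha (p4 φ)
      (sq_sqrt (p1 φ).le) rfl (cos_sq' φ) (p2 φ) (p3 φ) _ rfl
    rw [← hc] at this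
    beta_reduce
    rw [← show (sin φ ^ 2) ^ 2 = sin φ ^ 4 by ring] 
    exact this
  · exact iA.intervalIntegrable _ _
  · apply Continuous.intervalIntegrable
    fun_prop (disch := assumption)
end
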